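/- Let n ≥ 4, F a field of characteristic 2, and let S_F be the Specht F𝔖_n-module for (n−2,1,1) with basis {b(i₁,i₂) : 2 ≤ i₁ < i₂ ≤ n}. Then U₁ = { Σ β(i₁,i₂) b(i₁,i₂) : Σ β(i₁,i₂) = 0 } is an F𝔖_n-submodule of codimension 1 in S_F. Moreover, if n is odd, then U₂ = F·(Σ_{2≤i₁<i₂≤n} b(i₁,i₂)) is a trivial F𝔖_n-submodule of S_F. -/

import Mathlib

/-!
In characteristic `2` the dot product is alternating on coefficient-sum-zero vectors, because
`∑ xᵢ² = (∑ xᵢ)² = 0`. It therefore induces a linear functional on `⋀²`, which is invariant under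
permutations of the coordinates and takes the value `1` on every `b(i,j)`; `U₁` is its kernel.

For `U₂`, put `eᵢ = bᵢ - b₁`. Since `e₁ = 0`, the generator is `∑_{i<j} eᵢ ∧ eⱼ` over all pairs,
and `σ eᵢ = e_{σ i} - e_{σ 1}`. When `n` is odd and the characteristic is `2`, translating every
`eᵢ` by a fixed vector `z` changes the sum by `(n - 1) ∑ᵢ z ∧ eᵢ = 0`, and what remains is a
reindexing of the unordered pairs.
-/

open Finset

noncomputable section

/-- The `R`-linear map `⋀^k(f)` induced by `f`. -/
def exteriorPowerMap {R M N : Type*} [CommRing R] [AddCommGroup M] [Module R M]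
    [AddCommGroup N] [Module R N] (k : ℕ) (f : M →ₗ[R] N) : ⋀[R]^k M →ₗ[R] ⋀[R]^k N :=
  LinearMap.restrict (ExteriorAlgebra.map f).toLinearMap (p := ⋀[R]^k M) (q := ⋀[R]^k N)
    (fun x hx => by
      have h1 : Submodule.map (ExteriorAlgebra.map f).toLinearMap (⋀[R]^k M) ≤ ⋀[R]^k N := by
        rw [Submodule.map_pow]
        refine pow_le_pow_left' ?_ k
        rw [ExteriorAlgebra.ι_range_map_map]
        exact LinearMap.map_le_range
      exact h1 (Submodule.mem_map_of_mem hx))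

/-- The wedge `x ∧ y` in `⋀^2(M)`. -/
def wedgePair {R M : Type*} [CommRing R] [AddCommGroup M] [Module R M]
    (x y : M) : ⋀[R]^2 M :=
  ⟨ExteriorAlgebra.ιMulti R 2 ![x, y],
    ExteriorAlgebra.ιMulti_range R 2 (Set.mem_range_self _)⟩

variable (R : Type*) [CommRing R] (n : ℕ)

/-- The coefficient-sum functional on the natural permutation module. -/
def sumFunctional : (Fin n → R) →ₗ[R] R := ∑ i, LinearMap.proj i

/-- The natural Specht lattice `S^{(n-1,1)}`, realized as the kernel of the coefficient-sum
functional on the natural permutation module. -/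
def spechtW : Submodule R (Fin n → R) := LinearMap.ker (sumFunctional R n)

/-- The standard basis vector `e(1,i) = b_i − b_1` of the natural Specht lattice
(with `0`-based indices, index `0` playing the role of `1`). -/
def spechtE (h0 : 0 < n) (i : Fin n) : ↥(spechtW R n) :=
  ⟨Pi.single i 1 - Pi.single (⟨0, h0⟩ : Fin n) 1, by
    simp [spechtW, sumFunctional, LinearMap.mem_ker, Finset.sum_sub_distrib,
      Finset.sum_pi_single']⟩

/-- The action of `σ ∈ 𝔖_n` on the natural Specht lattice. -/
def spechtPerm (σ : Equiv.Perm (Fin n)) : ↥(spechtW R n) →ₗ[R] ↥(spechtW R n) :=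
  LinearMap.restrict (LinearMap.funLeft R R ⇑σ⁻¹)
    (fun x hx => by
      simp only [spechtW, LinearMap.mem_ker, sumFunctional, LinearMap.sum_apply,
        LinearMap.proj_apply, LinearMap.funLeft_apply] at hx ⊢
      rw [Equiv.sum_comp σ⁻¹ x]
      exact hx)

/-- The standard basis vector `b(i,j) = e(1,i) ∧ e(1,j)` of the Specht lattice
`S^{(n-2,1,1)} = ⋀²(S^{(n-1,1)})`. -/
def spechtBB (h0 : 0 < n) (i j : Fin n) : ⋀[R]^2 ↥(spechtW R n) :=
  wedgePair (spechtE R n h0 i) (spechtE R n h0 j)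

/-- The index set `{(i₁,i₂) : 2 ≤ i₁ < i₂ ≤ n}` of the standard basis of `S^{(n-2,1,1)}`
(`0`-based indices). -/
def PairIdx := {q : Fin n × Fin n // 0 < q.1.val ∧ q.1.val < q.2.val}

instance : Fintype (PairIdx n) := by unfold PairIdx; infer_instance
instance : DecidableEq (PairIdx n) := by unfold PairIdx; infer_instance

/-- The pair `(n-1, n)` (in `0`-based indices: `(n-2, n-1)`). -/
def pairMax (hn : 4 ≤ n) : PairIdx n :=
  ⟨(⟨n - 2, by omega⟩, ⟨n - 1, by omega⟩), ⟨show 0 < n - 2 by omega, show n - 2 < n - 1 by omega⟩⟩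

section ExteriorSquare

variable {R} {M N : Type*} [AddCommGroup M] [Module R M] [AddCommGroup N] [Module R N]

theorem wedgePair_eq_ιMulti (x y : M) : wedgePair x y = exteriorPower.ιMulti R 2 ![x, y] :=
  rfl

theorem coe_wedgePair (x y : M) :
    (wedgePair (R := R) x y).1 = ExteriorAlgebra.ι R x * ExteriorAlgebra.ι R y := by
  simp [wedgePair, ExteriorAlgebra.ιMulti_apply]

theorem coe_exteriorPowerMap (k : ℕ) (f : M →ₗ[R] N) (x : ⋀[R]^k M) :
    (exteriorPowerMap k f x).1 = ExteriorAlgebra.map f x.1 :=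
  rfl

theorem exteriorPowerMap_wedgePair (f : M →ₗ[R] N) (x y : M) :
    exteriorPowerMap 2 f (wedgePair x y) = wedgePair (f x) (f y) :=
  Subtype.ext (by simp [coe_exteriorPowerMap, coe_wedgePair])

theorem linearMap_ext_wedgePair {f g : ⋀[R]^2 M →ₗ[R] N}
    (h : ∀ x y, f (wedgePair x y) = g (wedgePair x y)) : f = g := by
  refine exteriorPower.linearMap_ext (AlternatingMap.ext fun v => ?_)
  rw [← FinVec.etaExpand_eq v]
  exact h (v 0) (v 1)

variable (R M) in
/-- The wedge product `(x, y) ↦ x ∧ y` as a bilinear map, giving access to the library on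
alternating bilinear maps. -/
def wedgeBilin : M →ₗ[R] M →ₗ[R] ⋀[R]^2 M :=
  LinearMap.mk₂ R wedgePair
    (fun _ _ _ => Subtype.ext (by simp [coe_wedgePair, add_mul]))
    (fun _ _ _ => Subtype.ext (by simp [coe_wedgePair]))
    (fun _ _ _ => Subtype.ext (by simp [coe_wedgePair, mul_add]))
    (fun _ _ _ => Subtype.ext (by simp [coe_wedgePair]))

theorem wedgeBilin_apply (x y : M) : wedgeBilin R M x y = wedgePair x y :=
  rfl

theorem isAlt_wedgeBilin : (wedgeBilin R M).IsAlt := fun x =>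
  Subtype.ext (by simp [wedgeBilin_apply, coe_wedgePair])

/-- The linear map on `⋀²` induced by an alternating bilinear map, that is, the universal property
of the exterior square. -/
def exteriorSquareLift (B : M →ₗ[R] M →ₗ[R] N) (hB : B.IsAlt) : ⋀[R]^2 M →ₗ[R] N :=
  exteriorPower.alternatingMapLinearEquiv
    { toFun := fun v => B (v 0) (v 1)
      map_update_add' := fun v i x y => by fin_cases i <;> simp [Function.update]
      map_update_smul' := fun v i c x => by fin_cases i <;> simp [Function.update]
      map_eq_zero_of_eq' := fun v i j hv hij => by
        have hv01 : v 0 = v 1 := by fin_cases i <;> fin_cases j <;> simp_all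
        rw [hv01, hB] }

theorem exteriorSquareLift_wedgePair (B : M →ₗ[R] M →ₗ[R] N) (hB : B.IsAlt) (x y : M) :
    exteriorSquareLift B hB (wedgePair x y) = B x y := by
  rw [wedgePair_eq_ιMulti, exteriorSquareLift,
    exteriorPower.alternatingMapLinearEquiv_apply_ιMulti]
  rfl

end ExteriorSquare

section SumOverPairs

theorem neg_eq_of_charTwo (R : Type*) {N : Type*} [Ring R] [CharP R 2] [AddCommGroup N]
    [Module R N] (x : N) : -x = x := by
  rw [← neg_one_smul R x, CharTwo.neg_eq, one_smul]

variable {ι A : Type*} [Fintype ι] [LinearOrder ι]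

theorem sum_lt_comp_perm [AddCommMonoid A] (f : ι → ι → A) (hf : ∀ i j, f i j = f j i)
    (σ : Equiv.Perm ι) :
    ∑ p : ι × ι with p.1 < p.2, f (σ p.1) (σ p.2) = ∑ p : ι × ι with p.1 < p.2, f p.1 p.2 := by
  have sum_lt_eq_sum_sym2 (g : Sym2 ι → A) :
      ∑ p : ι × ι with p.1 < p.2, g s(p.1, p.2) = ∑ e : Sym2 ι with ¬ e.IsDiag, g e := by
    rw [← Finset.sym2_univ, Finset.sum_sym2_filter_not_isDiag]
    congr 1
    ext p
    simpa using LT.lt.ne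
  let g : Sym2 ι → A := Sym2.lift ⟨f, hf⟩
  calc ∑ p : ι × ι with p.1 < p.2, g (Sym2.map σ s(p.1, p.2))
      = ∑ e : Sym2 ι with ¬ e.IsDiag, g (Sym2.map σ e) := sum_lt_eq_sum_sym2 (g ∘ Sym2.map σ)
    _ = ∑ e : Sym2 ι with ¬ e.IsDiag, g e :=
        Finset.sum_bijective (Sym2.map σ)
          ⟨Sym2.map.injective σ.injective, fun e => ⟨e.map σ.symm, by simp [Sym2.map_map]⟩⟩
          (fun e => by simp [Sym2.isDiag_map σ.injective]) (fun _ _ => rfl)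
    _ = ∑ p : ι × ι with p.1 < p.2, g s(p.1, p.2) := (sum_lt_eq_sum_sym2 g).symm

theorem sum_lt_fst_add_snd [AddCommMonoid A] (g : ι → A) :
    ∑ p : ι × ι with p.1 < p.2, (g p.1 + g p.2) = (Fintype.card ι - 1) • ∑ i, g i := by
  have sum_swap : ∑ p : ι × ι with p.1 < p.2, g p.2 = ∑ p : ι × ι with p.2 < p.1, g p.1 :=
    Finset.sum_equiv (Equiv.prodComm ι ι) (by simp) (by simp)
  have merge (i j : ι) :
      ((if i < j then g i else 0) + if j < i then g i else 0) = if j ≠ i then g i else 0 := by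
    rcases lt_trichotomy i j with h | rfl | h
    · simp [h, h.not_gt, h.ne']
    · simp
    · simp [h, h.not_gt, h.ne]
  calc ∑ p : ι × ι with p.1 < p.2, (g p.1 + g p.2)
      = ∑ i, ∑ j, if j ≠ i then g i else 0 := by
        rw [Finset.sum_add_distrib, sum_swap, Finset.sum_filter, Finset.sum_filter,
          ← Finset.sum_add_distrib, Fintype.sum_prod_type]
        simp only [merge]
    _ = ∑ i, (Fintype.card ι - 1) • g i := by
        refine Finset.sum_congr rfl fun i _ => ?_
        rw [← Finset.sum_filter, Finset.sum_const, Finset.filter_ne',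
          Finset.card_erase_of_mem (Finset.mem_univ i), Finset.card_univ]
    _ = (Fintype.card ι - 1) • ∑ i, g i := Finset.smul_sum.symm

variable {R} [CharP R 2] {M N : Type*} [AddCommGroup M] [Module R M] [AddCommGroup N] [Module R N]

theorem sum_lt_isAlt_sub_const {B : M →ₗ[R] M →ₗ[R] N} (hB : B.IsAlt)
    (hι : Odd (Fintype.card ι)) (v : ι → M) (z : M) :
    ∑ p : ι × ι with p.1 < p.2, B (v p.1 - z) (v p.2 - z) =
      ∑ p : ι × ι with p.1 < p.2, B (v p.1) (v p.2) := by
  have expand (x y : M) : B (x - z) (y - z) = B x y + (B z x + B z y) := by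
    calc B (x - z) (y - z) = B x y + (-B x z + -B z y) := by
          simp only [map_sub, LinearMap.sub_apply, hB z]
          abel
      _ = B x y + (B z x + B z y) := by rw [hB.neg, neg_eq_of_charTwo R (B z y)]
  have card_sub_one : ((Fintype.card ι - 1 : ℕ) : R) = 0 :=
    (CharP.cast_eq_zero_iff R 2 _).mpr (hι.tsub_odd odd_one).two_dvd
  simp only [expand]
  rw [Finset.sum_add_distrib, sum_lt_fst_add_snd fun i => B z (v i), ← Nat.cast_smul_eq_nsmul R,
    card_sub_one, zero_smul, add_zero]

end SumOverPairs

section LinearFunctional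

variable {R} {ι M : Type*} [AddCommGroup M] [Module R M]

theorem finrank_quotient_ker_eq_one [Nontrivial R] {φ : M →ₗ[R] R} {x : M} (hx : φ x = 1) :
    Module.finrank R (M ⧸ LinearMap.ker φ) = 1 := by
  have hφ : Function.Surjective φ := fun c => ⟨c • x, by simp [hx]⟩
  rw [(φ.quotKerEquivOfSurjective hφ).finrank_eq, Module.finrank_self]

variable [Fintype ι]

theorem sum_basis_ne_zero [Nontrivial R] [Nonempty ι] (b : Module.Basis ι R M) :
    ∑ i, b i ≠ 0 := by
  intro h
  have all_zero := Fintype.linearIndependent_iff.mp b.linearIndependent (fun _ => 1) (by simpa)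
  exact one_ne_zero (all_zero (Classical.arbitrary ι))

theorem coe_ker_eq_of_basis (b : Module.Basis ι R M) {φ : M →ₗ[R] R} (hφ : ∀ i, φ (b i) = 1) :
    (LinearMap.ker φ : Set M) = {x | ∃ β : ι → R, x = ∑ i, β i • b i ∧ ∑ i, β i = 0} := by
  have φ_sum (β : ι → R) : φ (∑ i, β i • b i) = ∑ i, β i := by simp [hφ]
  ext x
  constructor
  · intro hx
    refine ⟨b.repr x, (b.sum_repr x).symm, ?_⟩
    rw [← φ_sum, b.sum_repr, LinearMap.mem_ker.mp hx]
  · rintro ⟨β, rfl, hβ⟩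
    exact (φ_sum β).trans hβ

end LinearFunctional

section Specht

variable {R n}

theorem sum_coe_spechtW (x : spechtW R n) : ∑ i, x.1 i = 0 := by
  simpa [spechtW, sumFunctional] using x.2

theorem coe_spechtPerm (σ : Equiv.Perm (Fin n)) (x : spechtW R n) :
    (spechtPerm R n σ x : Fin n → R) = x.1 ∘ ⇑σ⁻¹ :=
  rfl

theorem coe_spechtE_apply (h0 : 0 < n) (i j : Fin n) :
    (spechtE R n h0 i).1 j =
      (Pi.single i 1 : Fin n → R) j - (Pi.single ⟨0, h0⟩ 1 : Fin n → R) j :=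
  rfl

theorem spechtE_zero (h0 : 0 < n) : spechtE R n h0 ⟨0, h0⟩ = 0 :=
  Subtype.ext (sub_self _)

theorem spechtPerm_spechtE (h0 : 0 < n) (σ : Equiv.Perm (Fin n)) (i : Fin n) :
    spechtPerm R n σ (spechtE R n h0 i) = spechtE R n h0 (σ i) - spechtE R n h0 (σ ⟨0, h0⟩) := by
  ext j
  simp [coe_spechtPerm, coe_spechtE_apply, Pi.single_apply, Equiv.symm_apply_eq]

theorem sum_smul_spechtE (h0 : 0 < n) (x : spechtW R n) :
    ∑ i, x.1 i • spechtE R n h0 i = x := by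
  ext j
  simp [coe_spechtE_apply, mul_sub, sum_coe_spechtW, Pi.single_apply]

theorem linearIndependent_spechtE (h0 : 0 < n) :
    LinearIndependent R fun i : {i : Fin n // 0 < i.val} => spechtE R n h0 i := by
  refine .of_pairwise_dual_eq_zero_one _
    (fun i => LinearMap.proj i.1 ∘ₗ (spechtW R n).subtype) ?_ ?_
  · intro i j hij
    have hi := i.2.ne'
    simp [coe_spechtE_apply, Fin.ext_iff, hi, Subtype.coe_ne_coe.mpr hij]
  · intro i
    have hi := i.2.ne'
    simp [coe_spechtE_apply, Fin.ext_iff, hi]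

theorem span_range_spechtE (h0 : 0 < n) :
    Submodule.span R (Set.range fun i : {i : Fin n // 0 < i.val} => spechtE R n h0 i) = ⊤ := by
  refine eq_top_iff.mpr fun x _ => ?_
  rw [← sum_smul_spechtE h0 x]
  refine Submodule.sum_mem _ fun i _ => Submodule.smul_mem _ _ ?_
  rcases Nat.eq_zero_or_pos i.val with hi | hi
  · obtain rfl : i = ⟨0, h0⟩ := Fin.ext hi
    rw [spechtE_zero]
    exact Submodule.zero_mem _
  · exact Submodule.subset_span ⟨⟨i, hi⟩, rfl⟩

variable (R) in
/-- The basis `{bᵢ - b₁ : 2 ≤ i ≤ n}` of the natural Specht lattice; its index type omits `0`. -/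
def spechtEBasis (h0 : 0 < n) : Module.Basis {i : Fin n // 0 < i.val} R (spechtW R n) :=
  .mk (linearIndependent_spechtE h0) (span_range_spechtE h0).ge

/-- `PairIdx n` in the form in which Mathlib indexes the exterior square of a basis: strictly
increasing pairs of nonzero indices. -/
def pairIdxEquivOrderEmb : PairIdx n ≃ (Fin 2 ↪o {i : Fin n // 0 < i.val}) where
  toFun q := OrderEmbedding.ofStrictMono ![⟨q.1.1, q.2.1⟩, ⟨q.1.2, q.2.1.trans q.2.2⟩]
    (Fin.strictMono_iff_lt_succ.mpr fun i => by fin_cases i; exact q.2.2)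
  invFun f := ⟨(f 0, f 1), (f 0).2, f.strictMono Fin.zero_lt_one⟩
  left_inv _ := rfl
  right_inv f := by
    ext i
    fin_cases i <;> rfl

variable (R) in
/-- The standard basis `b(i₁,i₂)` of the Specht lattice `S^{(n-2,1,1)}`. -/
def spechtBBBasis (h0 : 0 < n) : Module.Basis (PairIdx n) R (⋀[R]^2 (spechtW R n)) :=
  ((spechtEBasis R h0).exteriorPower 2).reindex
    (pairIdxEquivOrderEmb.trans Set.powersetCard.ofFinEmbEquiv).symm

theorem spechtBBBasis_apply (h0 : 0 < n) (q : PairIdx n) :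
    spechtBBBasis R h0 q = spechtBB R n h0 q.1.1 q.1.2 := by
  rw [spechtBBBasis, Module.Basis.reindex_apply, Equiv.symm_symm, exteriorPower.basis_apply,
    exteriorPower.ιMulti_family, Equiv.trans_apply, Equiv.symm_apply_apply, spechtBB,
    wedgePair_eq_ιMulti]
  congr 1
  ext i : 1
  fin_cases i <;> simp only [spechtEBasis, Function.comp_apply, Module.Basis.mk_apply] <;> rfl

theorem sum_spechtBB_eq_sum_lt (h0 : 0 < n) :
    ∑ q : PairIdx n, spechtBB R n h0 q.1.1 q.1.2 =
      ∑ p : Fin n × Fin n with p.1 < p.2,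
        wedgeBilin R _ (spechtE R n h0 p.1) (spechtE R n h0 p.2) := by
  let w (p : Fin n × Fin n) := wedgeBilin R _ (spechtE R n h0 p.1) (spechtE R n h0 p.2)
  calc ∑ q : PairIdx n, w q.1
      = ∑ p : Fin n × Fin n with 0 < p.1.val ∧ p.1.val < p.2.val, w p :=
        (Finset.sum_subtype _ (by simp) w).symm
    _ = ∑ p : Fin n × Fin n with p.1 < p.2, w p := by
        refine Finset.sum_subset (Finset.monotone_filter_right _ fun p _ hp => hp.2) ?_
        intro p hp hp'
        simp only [Finset.mem_filter, Finset.mem_univ, true_and] at hp hp'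
        have hp0 : p.1 = ⟨0, h0⟩ := Fin.ext (by rw [Fin.lt_def] at hp; lia)
        simp [w, hp0, spechtE_zero]

variable (R n) in
/-- The dot product on coefficient-sum-zero vectors. -/
def spechtDot : spechtW R n →ₗ[R] spechtW R n →ₗ[R] R :=
  (dotProductBilin R R).domRestrict₁₂ (spechtW R n) (spechtW R n)

theorem spechtDot_apply (x y : spechtW R n) : spechtDot R n x y = x.1 ⬝ᵥ y.1 :=
  rfl

variable [CharP R 2]

theorem isAlt_spechtDot : (spechtDot R n).IsAlt := fun x => by
  calc spechtDot R n x x = ∑ i, x.1 i * x.1 i := rfl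
    _ = (∑ i, x.1 i) * ∑ i, x.1 i := (CharTwo.sum_mul_self _ _).symm
    _ = 0 := by rw [sum_coe_spechtW, mul_zero]

variable (R n) in
/-- The functional `Σ β(i₁,i₂) b(i₁,i₂) ↦ Σ β(i₁,i₂)`, defined through the dot product so that its
invariance under permutations is visible; this needs characteristic `2`. -/
def coeffSum : ⋀[R]^2 (spechtW R n) →ₗ[R] R :=
  exteriorSquareLift (spechtDot R n) isAlt_spechtDot

theorem coeffSum_spechtBB (h0 : 0 < n) (q : PairIdx n) :
    coeffSum R n (spechtBB R n h0 q.1.1 q.1.2) = 1 := by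
  obtain ⟨⟨i, j⟩, hi, hij⟩ := q
  have hi0 : i ≠ ⟨0, h0⟩ := Fin.ne_of_gt hi
  have hj0 : j ≠ ⟨0, h0⟩ := Fin.ne_of_gt (hi.trans hij)
  have hij' : i ≠ j := Fin.ne_of_lt hij
  rw [coeffSum, spechtBB, exteriorSquareLift_wedgePair, spechtDot_apply]
  simp [spechtE, hi0, hj0, hij']

theorem coeffSum_exteriorPowerMap (σ : Equiv.Perm (Fin n)) (x : ⋀[R]^2 (spechtW R n)) :
    coeffSum R n (exteriorPowerMap 2 (spechtPerm R n σ) x) = coeffSum R n x := by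
  suffices h : coeffSum R n ∘ₗ exteriorPowerMap 2 (spechtPerm R n σ) = coeffSum R n from
    LinearMap.congr_fun h x
  refine linearMap_ext_wedgePair fun x y => ?_
  rw [LinearMap.comp_apply, exteriorPowerMap_wedgePair, coeffSum, exteriorSquareLift_wedgePair,
    exteriorSquareLift_wedgePair, spechtDot_apply, spechtDot_apply, coe_spechtPerm, coe_spechtPerm,
    comp_equiv_dotProduct_comp_equiv]

theorem exteriorPowerMap_sum_spechtBB (h0 : 0 < n) (hn : Odd n) (σ : Equiv.Perm (Fin n)) :
    exteriorPowerMap 2 (spechtPerm R n σ) (∑ q : PairIdx n, spechtBB R n h0 q.1.1 q.1.2) =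
      ∑ q : PairIdx n, spechtBB R n h0 q.1.1 q.1.2 := by
  simp only [sum_spechtBB_eq_sum_lt, map_sum, wedgeBilin_apply, exteriorPowerMap_wedgePair,
    spechtPerm_spechtE]
  simp only [← wedgeBilin_apply]
  rw [sum_lt_isAlt_sub_const isAlt_wedgeBilin (by simpa using hn) fun i => spechtE R n h0 (σ i)]
  refine sum_lt_comp_perm (fun i j => wedgeBilin R _ (spechtE R n h0 i) (spechtE R n h0 j))
    (fun i j => ?_) σ
  rw [← isAlt_wedgeBilin.neg]
  exact neg_eq_of_charTwo R _

end Specht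

theorem specht_submodule_U1_U2_general (R : Type*) [CommRing R] [CharP R 2] (n : ℕ) (hn : 3 ≤ n) :
    (∃ U₁ : Submodule R (⋀[R]^2 ↥(spechtW R n)),
      (U₁ : Set (⋀[R]^2 ↥(spechtW R n))) =
        {x | ∃ β : PairIdx n → R,
          x = ∑ q : PairIdx n, β q • spechtBB R n (by omega) q.1.1 q.1.2 ∧
          (∑ q : PairIdx n, β q) = 0} ∧
      (∀ (σ : Equiv.Perm (Fin n)), ∀ x ∈ U₁,
        exteriorPowerMap 2 (spechtPerm R n σ) x ∈ U₁) ∧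
      Module.finrank R ((⋀[R]^2 ↥(spechtW R n)) ⧸ U₁) = 1) ∧
    (Odd n →
      Submodule.span R {∑ q : PairIdx n, spechtBB R n (by omega) q.1.1 q.1.2} ≠ ⊥ ∧
      ∀ (σ : Equiv.Perm (Fin n)), ∀ x ∈ Submodule.span R
          ({∑ q : PairIdx n, spechtBB R n (by omega) q.1.1 q.1.2} :
            Set (⋀[R]^2 ↥(spechtW R n))),
        exteriorPowerMap 2 (spechtPerm R n σ) x = x) := by
  have h0 : 0 < n := by omega
  have : Nontrivial R := CharP.nontrivial_of_char_ne_one (v := 2) (by decide)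
  let q₀ : PairIdx n := ⟨(⟨1, by omega⟩, ⟨2, by omega⟩), Nat.one_pos, Nat.lt_succ_self 1⟩
  have coeffSum_basis (q : PairIdx n) : coeffSum R n (spechtBBBasis R h0 q) = 1 := by
    rw [spechtBBBasis_apply, coeffSum_spechtBB]
  refine ⟨⟨LinearMap.ker (coeffSum R n), ?_, fun σ x hx => ?_,
    finrank_quotient_ker_eq_one (coeffSum_basis q₀)⟩, fun hodd => ⟨?_, fun σ x hx => ?_⟩⟩
  · simpa only [spechtBBBasis_apply] using coe_ker_eq_of_basis (spechtBBBasis R h0) coeffSum_basis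
  · rwa [LinearMap.mem_ker, coeffSum_exteriorPowerMap]
  · have : Nonempty (PairIdx n) := ⟨q₀⟩
    rw [Ne, Submodule.span_singleton_eq_bot]
    simpa only [spechtBBBasis_apply] using sum_basis_ne_zero (spechtBBBasis R h0)
  · obtain ⟨c, rfl⟩ := Submodule.mem_span_singleton.mp hx
    rw [map_smul, exteriorPowerMap_sum_spechtBB h0 hodd]

set_option synthInstance.maxHeartbeats 1000000 in
set_option maxHeartbeats 1000000 in
/-- Let `n ≥ 4`, `F` a field of characteristic `2`, and let
`S_F = S^{(n-2,1,1)}_F = ⋀²(S^{(n-1,1)}_F)` be the Specht `F𝔖_n`-module with basis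
`{b(i₁,i₂) : 2 ≤ i₁ < i₂ ≤ n}`.  Then `U₁ = {Σ β(i₁,i₂)·b(i₁,i₂) : Σ β(i₁,i₂) = 0}` is an
`F𝔖_n`-submodule of codimension `1` in `S_F`.  Moreover, if `n` is odd, then
`U₂ = F·(Σ b(i₁,i₂))` is a (nonzero) trivial `F𝔖_n`-submodule of `S_F`. -/
theorem specht_submodule_U1_U2 (F : Type*) [Field F] [CharP F 2] (n : ℕ) (hn : 4 ≤ n) :
    (∃ U₁ : Submodule F (⋀[F]^2 ↥(spechtW F n)),
      (U₁ : Set (⋀[F]^2 ↥(spechtW F n))) =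
        {x | ∃ β : PairIdx n → F,
          x = ∑ q : PairIdx n, β q • spechtBB F n (by omega) q.1.1 q.1.2 ∧
          (∑ q : PairIdx n, β q) = 0} ∧
      (∀ (σ : Equiv.Perm (Fin n)), ∀ x ∈ U₁,
        exteriorPowerMap 2 (spechtPerm F n σ) x ∈ U₁) ∧
      Module.finrank F ((⋀[F]^2 ↥(spechtW F n)) ⧸ U₁) = 1) ∧
    (Odd n →
      Submodule.span F {∑ q : PairIdx n, spechtBB F n (by omega) q.1.1 q.1.2} ≠ ⊥ ∧
      ∀ (σ : Equiv.Perm (Fin n)), ∀ x ∈ Submodule.span F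
          ({∑ q : PairIdx n, spechtBB F n (by omega) q.1.1 q.1.2} :
            Set (⋀[F]^2 ↥(spechtW F n))),
        exteriorPowerMap 2 (spechtPerm F n σ) x = x) :=
  specht_submodule_U1_U2_general F n (by omega)

end
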